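/- arXiv:1810.11636 — 8 statements merged into one kernel-verified Lean document; each statement's English description precedes it below -/
import Mathlib

section
/- Let f : ℝⁿ → ℝⁿ be locally Lipschitz and regular at p* ∈ ℝⁿ, i.e. every V ∈ ∂f(p*) is invertible, and let λ ≥ max{‖V⁻¹‖ : V ∈ ∂f(p*)}. Then for every ε > 0 with ελ < 1 there exists δ > 0 such that f is regular on B_δ(p*) (every element of ∂f(q) for q ∈ B_δ(p*) is invertible) and ‖V⁻¹‖ ≤ λ / (1 − ελ) for all q ∈ B_δ(p*) and all V ∈ ∂f(q). -/
open Metric Filter Topology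

noncomputable section

/-- The Clarke generalized Jacobian of `f : ℝⁿ → ℝⁿ` at `p`: the convex hull of all limits
of Jacobians `Df(p_k)` along sequences of differentiability points `p_k → p`. -/
def clarkeJacobian {n : ℕ} (f : EuclideanSpace ℝ (Fin n) → EuclideanSpace ℝ (Fin n))
    (p : EuclideanSpace ℝ (Fin n)) :
    Set (EuclideanSpace ℝ (Fin n) →L[ℝ] EuclideanSpace ℝ (Fin n)) :=
  convexHull ℝ {H | ∃ u : ℕ → EuclideanSpace ℝ (Fin n),
    (∀ k, DifferentiableAt ℝ f (u k)) ∧ Tendsto u atTop (𝓝 p) ∧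
    Tendsto (fun k => fderiv ℝ f (u k)) atTop (𝓝 H)}

theorem aux_ring {R : Type*} [NormedRing R] [CompleteSpace R] (V W : R) (lam ε : ℝ)
    (hW : IsUnit W) (hl : ‖Ring.inverse W‖ ≤ lam) (hd : ‖V - W‖ ≤ ε) (h1 : ε * lam < 1) :
    IsUnit V ∧ ‖Ring.inverse V‖ ≤ lam / (1 - ε * lam) := by
  have hlam : 0 ≤ lam := (norm_nonneg _).trans hl
  have hε : 0 ≤ ε := (norm_nonneg _).trans hd
  have hsm : ‖Ring.inverse W * (W - V)‖ < 1 := by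
    calc _ ≤ ‖Ring.inverse W‖ * ‖W - V‖ := norm_mul_le _ _
      _ ≤ lam * ε := by rw [norm_sub_rev]; gcongr
      _ < 1 := by linarith
  have hV : IsUnit V := by
    have h2 : IsUnit (1 - Ring.inverse W * (W - V)) := isUnit_one_sub_of_norm_lt_one hsm
    have h3 : V = W * (1 - Ring.inverse W * (W - V)) := by
      rw [mul_sub, ← mul_assoc, Ring.mul_inverse_cancel _ hW]; simp
    rw [h3]; exact hW.mul h2
  refine ⟨hV, ?_⟩
  have h4 : Ring.inverse V = Ring.inverse W - Ring.inverse V * (V - W) * Ring.inverse W := by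
    rw [mul_sub, sub_mul, Ring.inverse_mul_cancel _ hV, mul_assoc, Ring.mul_inverse_cancel _ hW]
    simp
  have h5 : ‖Ring.inverse V‖ ≤ lam + ‖Ring.inverse V‖ * ε * lam := by
    calc ‖Ring.inverse V‖ = ‖Ring.inverse W - Ring.inverse V * (V - W) * Ring.inverse W‖ := by
          rw [← h4]
      _ ≤ ‖Ring.inverse W‖ + ‖Ring.inverse V * (V - W) * Ring.inverse W‖ := norm_sub_le _ _
      _ ≤ ‖Ring.inverse W‖ + ‖Ring.inverse V‖ * ‖V - W‖ * ‖Ring.inverse W‖ := by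
          gcongr; exact norm_mul₃_le
      _ ≤ _ := by gcongr
  rw [le_div_iff₀ (by linarith)]
  nlinarith

theorem aux_usc {n : ℕ}
    (f : EuclideanSpace ℝ (Fin n) → EuclideanSpace ℝ (Fin n)) (hf : LocallyLipschitz f)
    (p : EuclideanSpace ℝ (Fin n)) (ε : ℝ) (hε : 0 < ε) :
    ∃ δ > (0 : ℝ), ∀ q ∈ ball p δ, DifferentiableAt ℝ f q →
      fderiv ℝ f q ∈ thickening ε (clarkeJacobian f p) := by
  by_contra! hcon
  have hpos : ∀ k : ℕ, (0 : ℝ) < 1 / ((k : ℝ) + 1) := fun k => Nat.one_div_pos_of_nat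
  choose u hu hdu hnu using fun k : ℕ => hcon _ (hpos k)
  have hup : Tendsto u atTop (𝓝 p) := by
    rw [tendsto_iff_dist_tendsto_zero]
    exact squeeze_zero (fun _ => dist_nonneg) (fun k => (mem_ball.1 (hu k)).le)
      tendsto_one_div_add_atTop_nhds_zero_nat
  obtain ⟨K, t, ht, hK⟩ := hf p
  have hev : ∀ᶠ k in atTop, fderiv ℝ f (u k) ∈ closedBall 0 (K : ℝ) := by
    filter_upwards [hup.eventually (eventually_mem_nhds_iff.2 ht)] with k hk
    rw [mem_closedBall_zero_iff]
    exact norm_fderiv_le_of_lipschitzOn ℝ hk hK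
  obtain ⟨H, -, φ, hφ, hH⟩ := (isCompact_closedBall (0 : EuclideanSpace ℝ (Fin n) →L[ℝ]
    EuclideanSpace ℝ (Fin n)) (K : ℝ)).tendsto_subseq' hev.frequently
  have hHm : H ∈ clarkeJacobian f p :=
    subset_convexHull ℝ _ ⟨u ∘ φ, fun k => hdu _, hup.comp hφ.tendsto_atTop, hH⟩
  have := hH.eventually (isOpen_thickening.mem_nhds (self_subset_thickening hε _ hHm))
  obtain ⟨k, hk⟩ := this.exists
  exact hnu _ hk

/-- A locally Lipschitz map that is regular at `p*` (every element of the Clarke generalized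
Jacobian is invertible) is regular near `p*`, with a uniform bound on the inverses. -/
theorem regular_near_regular_point {n : ℕ}
    (f : EuclideanSpace ℝ (Fin n) → EuclideanSpace ℝ (Fin n)) (hf : LocallyLipschitz f)
    (pstar : EuclideanSpace ℝ (Fin n)) (lam : ℝ)
    (hreg : ∀ V ∈ clarkeJacobian f pstar, IsUnit V)
    (hlam : ∀ V ∈ clarkeJacobian f pstar, ‖Ring.inverse V‖ ≤ lam) :
    ∀ ε > (0 : ℝ), ε * lam < 1 →
      ∃ δ > (0 : ℝ), ∀ q ∈ ball pstar δ, ∀ V ∈ clarkeJacobian f q,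
        IsUnit V ∧ ‖Ring.inverse V‖ ≤ lam / (1 - ε * lam) := by
  intro ε hε h1
  obtain ⟨δ, hδ, hd⟩ := aux_usc f hf pstar (ε / 2) (by linarith)
  refine ⟨δ, hδ, fun q hq V hV => ?_⟩
  have hconv : Convex ℝ (thickening ε (clarkeJacobian f pstar)) :=
    (convex_convexHull ℝ _).thickening ε
  have hsub : clarkeJacobian f q ⊆ thickening ε (clarkeJacobian f pstar) := by
    refine convexHull_min ?_ hconv
    rintro H ⟨u, hu, hup, hH⟩
    have hcl : H ∈ closure (thickening (ε / 2) (clarkeJacobian f pstar)) := by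
      refine mem_closure_of_tendsto hH ?_
      filter_upwards [hup.eventually (isOpen_ball.mem_nhds hq)] with k hk
      exact hd _ hk (hu k)
    exact cthickening_subset_thickening' hε (by linarith) _
      (closure_thickening_subset_cthickening _ _ hcl)
  obtain ⟨W, hW, hVW⟩ := mem_thickening_iff.1 (hsub hV)
  exact aux_ring V W lam ε (hreg W hW) (hlam W hW) (by rw [← dist_eq_norm]; exact hVW.le) h1
end
end

section
/- Let f : ℝⁿ → ℝⁿ be locally Lipschitz, let x* satisfy f(x*) = 0, and let δ > 0, λ > 0, ε > 0 and μ ∈ [0, 1] with ελ < 1 be such that for all p ∈ B_δ(x*) and all V ∈ ∂f(p): V is invertible, ‖V⁻¹‖ ≤ λ/(1 − ελ), and ‖f(x*) − f(p) − V(x* − p)‖ ≤ ε‖p − x*‖^{1+μ}. Then for all p ∈ B_δ(x*) and all V ∈ ∂f(p), the Newton update satisfies ‖(p − V⁻¹ f(p)) − x*‖ ≤ (ελ/(1 − ελ)) · ‖p − x*‖^{1+μ}. Moreover, if in addition ελ(1 + δ^μ) < 1, then the Newton iteration map p ↦ p − V⁻¹f(p) maps B_δ(x*) into B_δ(x*).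 -/
open Metric Filter Topology

noncomputable section

/-- Local estimate for the Newton step (Euclidean case of Lemma 4.1): under regularity and a
`(1+μ)`-order linearization bound on a ball around a zero `x*`, the Newton update
`p - V⁻¹ f(p)` satisfies `‖p - V⁻¹f(p) - x*‖ ≤ (ελ/(1-ελ))‖p - x*‖^{1+μ}`; moreover, if
`ελ(1 + δ^μ) < 1`, then the Newton iteration map sends the ball into itself. -/
theorem newton_step_estimate {n : ℕ}
    (f : EuclideanSpace ℝ (Fin n) → EuclideanSpace ℝ (Fin n)) (hf : LocallyLipschitz f)
    (xs : EuclideanSpace ℝ (Fin n)) (hxs : f xs = 0)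
    (δ lam ε μ : ℝ) (hδ : 0 < δ) (hlam : 0 < lam) (hε : 0 < ε)
    (hμ : μ ∈ Set.Icc (0 : ℝ) 1) (hεlam : ε * lam < 1)
    (hyp : ∀ p ∈ ball xs δ, ∀ V ∈ clarkeJacobian f p,
      IsUnit V ∧ ‖Ring.inverse V‖ ≤ lam / (1 - ε * lam) ∧
      ‖f xs - f p - V (xs - p)‖ ≤ ε * ‖p - xs‖ ^ (1 + μ)) :
    ∀ p ∈ ball xs δ, ∀ V ∈ clarkeJacobian f p,
      ‖p - Ring.inverse V (f p) - xs‖ ≤ ε * lam / (1 - ε * lam) * ‖p - xs‖ ^ (1 + μ) ∧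
      (ε * lam * (1 + δ ^ μ) < 1 → p - Ring.inverse V (f p) ∈ ball xs δ) := by
  intro p hp V hV
  obtain ⟨hU, hinv, hlin⟩ := hyp p hp V hV
  have hpos : 0 < 1 - ε * lam := by linarith
  have hcancel : ∀ w, Ring.inverse V (V w) = w := by
    intro w
    have h := Ring.inverse_mul_cancel V hU
    have h2 := congrArg (fun T => T w) h
    simpa using h2
  have hkey : p - Ring.inverse V (f p) - xs
      = Ring.inverse V (f xs - f p - V (xs - p)) := by
    rw [map_sub, hcancel, hxs, zero_sub, map_neg]
    abel
  have hmain : ‖p - Ring.inverse V (f p) - xs‖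
      ≤ ε * lam / (1 - ε * lam) * ‖p - xs‖ ^ (1 + μ) := by
    rw [hkey]
    calc _ ≤ ‖Ring.inverse V‖ * ‖f xs - f p - V (xs - p)‖ :=
          ContinuousLinearMap.le_opNorm _ _
      _ ≤ (lam / (1 - ε * lam)) * (ε * ‖p - xs‖ ^ (1 + μ)) := by gcongr
      _ = _ := by ring
  refine ⟨hmain, fun hc => ?_⟩
  rw [mem_ball, dist_eq_norm] at hp ⊢
  have hr : 0 ≤ ‖p - xs‖ := norm_nonneg _
  have hμ0 : 0 ≤ μ := hμ.1
  have h1 : ‖p - xs‖ ^ (1 + μ) = ‖p - xs‖ * ‖p - xs‖ ^ μ := by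
    rw [Real.rpow_add' hr (by linarith), Real.rpow_one]
  have h2 : ‖p - xs‖ ^ μ ≤ δ ^ μ := Real.rpow_le_rpow hr hp.le hμ0
  have h3 : ε * lam / (1 - ε * lam) * δ ^ μ ≤ 1 := by
    rw [div_mul_eq_mul_div, div_le_one hpos]
    linarith
  have h0 : 0 ≤ ε * lam / (1 - ε * lam) := by positivity
  calc _ ≤ _ := hmain
    _ = (ε * lam / (1 - ε * lam) * ‖p - xs‖ ^ μ) * ‖p - xs‖ := by rw [h1]; ring
    _ ≤ (ε * lam / (1 - ε * lam) * δ ^ μ) * ‖p - xs‖ := by gcongr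
    _ ≤ 1 * ‖p - xs‖ := by gcongr
    _ < δ := by linarith
end
end

section
/- Let f : ℝⁿ → ℝⁿ be locally Lipschitz, let x* satisfy f(x*) = 0, and let δ > 0, λ > 0, ε > 0 and μ ∈ [0, 1] with ελ(1 + δ^μ) < 1 be such that for all p ∈ B_δ(x*) and all V ∈ ∂f(p): V is invertible, ‖V⁻¹‖ ≤ λ/(1 − ελ), and ‖f(x*) − f(p) − V(x* − p)‖ ≤ ε‖p − x*‖^{1+μ}. Then for every x₀ ∈ B_δ(x*) \ {x*}, every sequence {x_k} with x_{k+1} = x_k − V_k⁻¹ f(x_k) for some V_k ∈ ∂f(x_k) is well-defined, remains in B_δ(x*), converges to x*, and satisfies ‖x_{k+1} − x*‖ ≤ (ελ/(1 − ελ)) · ‖x_k − x*‖^{1+μ} for all k ≥ 0. -/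
open Metric Filter Topology

noncomputable section

/-- Local convergence of the semismooth Newton method with order `1 + μ` (Euclidean case of
Theorem 4.2): every Newton sequence starting in a suitable ball around the zero `x*` is
well-defined, stays in the ball and converges to `x*` with order `1 + μ`. -/
theorem newton_local_convergence {n : ℕ}
    (f : EuclideanSpace ℝ (Fin n) → EuclideanSpace ℝ (Fin n)) (hf : LocallyLipschitz f)
    (xs : EuclideanSpace ℝ (Fin n)) (hxs : f xs = 0)
    (δ lam ε μ : ℝ) (hδ : 0 < δ) (hlam : 0 < lam) (hε : 0 < ε)
    (hμ : μ ∈ Set.Icc (0 : ℝ) 1) (hεlam : ε * lam * (1 + δ ^ μ) < 1)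
    (hyp : ∀ p ∈ ball xs δ, ∀ V ∈ clarkeJacobian f p,
      IsUnit V ∧ ‖Ring.inverse V‖ ≤ lam / (1 - ε * lam) ∧
      ‖f xs - f p - V (xs - p)‖ ≤ ε * ‖p - xs‖ ^ (1 + μ)) :
    ∀ x₀ ∈ ball xs δ, x₀ ≠ xs →
      ∀ (x : ℕ → EuclideanSpace ℝ (Fin n))
        (V : ℕ → (EuclideanSpace ℝ (Fin n) →L[ℝ] EuclideanSpace ℝ (Fin n))),
        x 0 = x₀ → (∀ k, V k ∈ clarkeJacobian f (x k)) →
        (∀ k, x (k + 1) = x k - Ring.inverse (V k) (f (x k))) →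
        (∀ k, IsUnit (V k)) ∧ (∀ k, x k ∈ ball xs δ) ∧
        Tendsto x atTop (𝓝 xs) ∧
        ∀ k, ‖x (k + 1) - xs‖ ≤ ε * lam / (1 - ε * lam) * ‖x k - xs‖ ^ (1 + μ) := by
  intro x₀ hx₀ _ x V hx0 hV hx
  have hδμ : 0 < δ ^ μ := Real.rpow_pos_of_pos hδ μ
  have hel : 0 < ε * lam := mul_pos hε hlam
  have hpos : 0 < 1 - ε * lam := by nlinarith [mul_pos hel hδμ]
  have hc : 0 < ε * lam / (1 - ε * lam) := div_pos hel hpos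
  set c := ε * lam / (1 - ε * lam) with hcdef
  have hq : c * δ ^ μ < 1 := by
    rw [hcdef, div_mul_eq_mul_div, div_lt_one hpos]
    linarith
  have hq0 : 0 < c * δ ^ μ := mul_pos hc hδμ
  have step : ∀ k, x k ∈ ball xs δ →
      ‖x (k + 1) - xs‖ ≤ c * ‖x k - xs‖ ^ (1 + μ) := by
    intro k hk
    obtain ⟨hu, hn, hb⟩ := hyp (x k) hk (V k) (hV k)
    have hinv : ∀ y, Ring.inverse (V k) (V k y) = y := by
      intro y
      have h := Ring.inverse_mul_cancel (V k) hu
      have h2 := congrArg (fun A => A y) h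
      simpa using h2
    have e : x (k + 1) - xs = Ring.inverse (V k) (f xs - f (x k) - V k (xs - x k)) := by
      rw [hx k, hxs, map_sub, hinv, zero_sub, map_neg]
      abel
    rw [e]
    calc _ ≤ ‖Ring.inverse (V k)‖ * ‖f xs - f (x k) - V k (xs - x k)‖ :=
          ContinuousLinearMap.le_opNorm _ _
      _ ≤ (lam / (1 - ε * lam)) * (ε * ‖x k - xs‖ ^ (1 + μ)) :=
          mul_le_mul hn hb (norm_nonneg _) (div_pos hlam hpos).le
      _ = c * ‖x k - xs‖ ^ (1 + μ) := by rw [hcdef]; ring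
  have lin : ∀ k, x k ∈ ball xs δ → ‖x (k + 1) - xs‖ ≤ (c * δ ^ μ) * ‖x k - xs‖ := by
    intro k hk
    have hd : ‖x k - xs‖ < δ := by rwa [mem_ball_iff_norm] at hk
    have h1 : ‖x k - xs‖ ^ μ ≤ δ ^ μ := Real.rpow_le_rpow (norm_nonneg _) hd.le hμ.1
    refine (step k hk).trans ?_
    rw [Real.rpow_add_of_nonneg (norm_nonneg _) zero_le_one hμ.1, Real.rpow_one]
    calc c * (‖x k - xs‖ * ‖x k - xs‖ ^ μ) ≤ c * (‖x k - xs‖ * δ ^ μ) := by gcongr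
      _ = _ := by ring
  have mem : ∀ k, x k ∈ ball xs δ := by
    intro k
    induction k with
    | zero => rw [hx0]; exact hx₀
    | succ k ih =>
      have h := lin k ih
      rw [mem_ball_iff_norm] at ih ⊢
      nlinarith [norm_nonneg (x k - xs)]
  have geo : ∀ k, ‖x k - xs‖ ≤ (c * δ ^ μ) ^ k * δ := by
    intro k
    induction k with
    | zero =>
      have := mem 0
      rw [mem_ball_iff_norm] at this
      simpa using this.le
    | succ k ih =>
      calc _ ≤ (c * δ ^ μ) * ‖x k - xs‖ := lin k (mem k)
        _ ≤ (c * δ ^ μ) * ((c * δ ^ μ) ^ k * δ) := mul_le_mul_of_nonneg_left ih hq0.le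
        _ = _ := by ring
  refine ⟨fun k => (hyp (x k) (mem k) (V k) (hV k)).1, mem, ?_, fun k => step k (mem k)⟩
  rw [tendsto_iff_norm_sub_tendsto_zero]
  have ht := (tendsto_pow_atTop_nhds_zero_of_lt_one hq0.le hq).mul_const δ
  rw [zero_mul] at ht
  exact squeeze_zero (fun k => norm_nonneg _) geo ht
end
end

section
/- Let f : ℝⁿ → ℝⁿ be locally Lipschitz, let x* satisfy f(x*) = 0, and assume f is semismooth and regular at x* (every V ∈ ∂f(x*) is invertible). Then there exists δ > 0 such that for every x₀ ∈ B_δ(x*) \ {x*}, every sequence {x_k} with x_{k+1} = x_k − V_k⁻¹ f(x_k) for some V_k ∈ ∂f(x_k) is well-defined, remains in B_δ(x*), and converges superlinearly to x*, i.e. x_k → x* and ‖x_{k+1} − x*‖ / ‖x_k − x*‖ → 0. -/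
open Metric Filter Topology

noncomputable section

theorem nss_compact_convexHull {E : Type*} [NormedAddCommGroup E] [NormedSpace ℝ E]
    [FiniteDimensional ℝ E] {s : Set E} (hs : IsCompact s) : IsCompact (convexHull ℝ s) := by
  have key : convexHull ℝ s = ⋃ m ∈ Finset.range (Module.finrank ℝ E + 2),
      (fun q : (Fin m → ℝ) × (Fin m → E) => ∑ i, q.1 i • q.2 i) ''
        (stdSimplex ℝ (Fin m) ×ˢ Set.univ.pi fun _ => s) := by
    ext y
    simp only [Set.mem_iUnion, Set.mem_image, Set.mem_prod, Set.mem_pi, Set.mem_univ, true_imp_iff,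
      Finset.mem_range, exists_prop]
    constructor
    · intro hy
      obtain ⟨ι, _, z, w, hz, hind, hw, hsum, hy⟩ := eq_pos_convex_span_of_mem_convexHull hy
      have hcard : Fintype.card ι ≤ Module.finrank ℝ E + 1 :=
        hind.card_le_finrank_succ.trans (Nat.add_le_add_right (Submodule.finrank_le _) 1)
      let e := (Fintype.equivFin ι).symm
      refine ⟨Fintype.card ι, by omega, (w ∘ e, z ∘ e), ⟨⟨fun i => (hw _).le, ?_⟩, ?_⟩, ?_⟩
      · rw [← hsum]; exact e.sum_comp w
      · intro i; exact hz ⟨_, rfl⟩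
      · rw [← hy]; exact e.sum_comp (fun i => w i • z i)
    · rintro ⟨m, -, q, ⟨hq1, hq2⟩, rfl⟩
      exact (convex_convexHull ℝ s).sum_mem (fun i _ => hq1.1 i) hq1.2
        (fun i _ => subset_convexHull ℝ s (hq2 i))
  rw [key]
  refine (Finset.range _).isCompact_biUnion fun m _ => ?_
  refine IsCompact.image ((isCompact_stdSimplex ℝ (Fin m)).prod (isCompact_univ_pi fun _ => hs)) ?_
  fun_prop

theorem nss_bound {n : ℕ}
    (f : EuclideanSpace ℝ (Fin n) → EuclideanSpace ℝ (Fin n)) (hf : LocallyLipschitz f)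
    (xs : EuclideanSpace ℝ (Fin n))
    (hreg : ∀ V ∈ clarkeJacobian f xs, IsUnit V) :
    ∃ δ > (0 : ℝ), ∃ C > (0 : ℝ), ∀ p ∈ ball xs δ, ∀ V ∈ clarkeJacobian f p,
      IsUnit V ∧ ‖Ring.inverse V‖ ≤ C := by
  obtain ⟨K, t, ht, hlip⟩ := hf xs
  obtain ⟨r, hr, hrt⟩ := Metric.mem_nhds_iff.1 ht
  have hbd : ∀ q ∈ ball xs r, ‖fderiv ℝ f q‖ ≤ K := fun q hq =>
    norm_fderiv_le_of_lipschitzOn ℝ (isOpen_ball.mem_nhds hq) (hlip.mono hrt)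
  set L := EuclideanSpace ℝ (Fin n) →L[ℝ] EuclideanSpace ℝ (Fin n)
  set S : Set L := {H | ∃ u : ℕ → EuclideanSpace ℝ (Fin n),
    (∀ k, DifferentiableAt ℝ f (u k)) ∧ Tendsto u atTop (𝓝 xs) ∧
    Tendsto (fun k => fderiv ℝ f (u k)) atTop (𝓝 H)} with hS
  have hSclosed : IsClosed S := by
    have : S = (fun H : L => (xs, H)) ⁻¹'
        closure ((fun q => (q, fderiv ℝ f q)) '' {q | DifferentiableAt ℝ f q}) := by
      ext H
      simp only [Set.mem_preimage, mem_closure_iff_seq_limit]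
      constructor
      · rintro ⟨u, hu, h1, h2⟩
        exact ⟨fun k => (u k, fderiv ℝ f (u k)), fun k => ⟨u k, hu k, rfl⟩, h1.prodMk_nhds h2⟩
      · rintro ⟨v, hv, hlim⟩
        choose u hu huv using hv
        have hv' : v = fun k => (u k, fderiv ℝ f (u k)) := funext fun k => (huv k).symm
        subst hv'
        rw [nhds_prod_eq] at hlim
        exact ⟨u, hu, hlim.fst, hlim.snd⟩
    rw [this]
    exact isClosed_closure.preimage (by fun_prop)
  have hScpt : IsCompact S := by
    refine (isCompact_closedBall (0 : L) K).of_isClosed_subset hSclosed ?_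
    rintro H ⟨u, hu, h1, h2⟩
    rw [mem_closedBall_zero_iff]
    refine le_of_tendsto h2.norm ?_
    filter_upwards [h1.eventually (ball_mem_nhds xs hr)] with k hk using hbd _ hk
  have hJ : IsCompact (clarkeJacobian f xs) := nss_compact_convexHull hScpt
  obtain ⟨ε, hε, hεU⟩ := hJ.exists_cthickening_subset_open (Units.isOpen (R := L))
    (fun V hV => hreg V hV)
  have hT : IsCompact (cthickening ε (clarkeJacobian f xs)) := hJ.cthickening
  obtain ⟨C, hC⟩ := hT.exists_bound_of_continuousOn (f := fun V : L => Ring.inverse V) (by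
    intro V hV
    obtain ⟨v, hv⟩ := hεU hV
    rw [← hv]
    exact (NormedRing.inverse_continuousAt v).continuousWithinAt)
  have husc : ∃ δ > (0 : ℝ), ∀ q ∈ ball xs δ, DifferentiableAt ℝ f q →
      fderiv ℝ f q ∈ cthickening ε (clarkeJacobian f xs) := by
    by_contra! hcon
    choose q hq hd hnot using fun k : ℕ => hcon (1 / ((k : ℝ) + 1)) Nat.one_div_pos_of_nat
    have hqlim : Tendsto q atTop (𝓝 xs) := by
      rw [tendsto_iff_dist_tendsto_zero]
      exact squeeze_zero (fun _ => dist_nonneg) (fun k => (mem_ball.1 (hq k)).le)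
        tendsto_one_div_add_atTop_nhds_zero_nat
    obtain ⟨N, hN⟩ := eventually_atTop.1 (hqlim.eventually (ball_mem_nhds xs hr))
    obtain ⟨H, -, φ, hφ, hlim⟩ := (isCompact_closedBall (0 : L) K).tendsto_subseq
      (x := fun k => fderiv ℝ f (q (k + N)))
      (fun k => mem_closedBall_zero_iff.2 (hbd _ (hN _ (by omega))))
    have hHS : H ∈ S := ⟨fun k => q (φ k + N), fun k => hd _,
      (hqlim.comp (tendsto_add_atTop_nat N)).comp hφ.tendsto_atTop, hlim⟩
    have hHJ : H ∈ clarkeJacobian f xs := subset_convexHull ℝ S hHS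
    have hnb : cthickening ε (clarkeJacobian f xs) ∈ 𝓝 H :=
      mem_of_superset (isOpen_thickening.mem_nhds (self_subset_thickening hε _ hHJ))
        (thickening_subset_cthickening _ _)
    obtain ⟨k, hk⟩ := (hlim.eventually hnb).exists
    exact hnot _ hk
  obtain ⟨δ, hδ, hδT⟩ := husc
  have hsub : ∀ p ∈ ball xs δ, clarkeJacobian f p ⊆ cthickening ε (clarkeJacobian f xs) := by
    intro p hp
    refine convexHull_min ?_ ((convex_convexHull ℝ S).cthickening ε)
    rintro H ⟨u, hu, h1, h2⟩
    refine isClosed_cthickening.mem_of_tendsto h2 ?_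
    filter_upwards [h1.eventually (isOpen_ball.mem_nhds hp)] with k hk using hδT _ hk (hu k)
  exact ⟨δ, hδ, max C 1, by positivity, fun p hp V hV =>
    ⟨hεU (hsub p hp hV), (hC V (hsub p hp hV)).trans (le_max_left _ _)⟩⟩

/-- Superlinear local convergence of the Newton method for a semismooth map that is regular
at a zero `x*` (Euclidean case of the first part of Theorem 4.3). -/
theorem newton_semismooth_superlinear {n : ℕ}
    (f : EuclideanSpace ℝ (Fin n) → EuclideanSpace ℝ (Fin n)) (hf : LocallyLipschitz f)
    (xs : EuclideanSpace ℝ (Fin n)) (hxs : f xs = 0)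
    -- `f` is directionally differentiable near `x*`:
    (hdir : ∃ δ₀ > (0 : ℝ), ∀ p ∈ ball xs δ₀, ∀ v : EuclideanSpace ℝ (Fin n),
      ∃ d : EuclideanSpace ℝ (Fin n),
        Tendsto (fun t : ℝ => t⁻¹ • (f (p + t • v) - f p)) (𝓝[>] (0 : ℝ)) (𝓝 d))
    -- semismoothness estimate at `x*`:
    (hss : ∀ ε > (0 : ℝ), ∃ δ > (0 : ℝ), ∀ p ∈ ball xs δ, ∀ V ∈ clarkeJacobian f p,
      ‖f xs - f p - V (xs - p)‖ ≤ ε * ‖p - xs‖)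
    -- regularity at `x*`:
    (hreg : ∀ V ∈ clarkeJacobian f xs, IsUnit V) :
    ∃ δ > (0 : ℝ), ∀ x₀ ∈ ball xs δ, x₀ ≠ xs →
      ∀ (x : ℕ → EuclideanSpace ℝ (Fin n))
        (V : ℕ → (EuclideanSpace ℝ (Fin n) →L[ℝ] EuclideanSpace ℝ (Fin n))),
        x 0 = x₀ → (∀ k, V k ∈ clarkeJacobian f (x k)) →
        (∀ k, x (k + 1) = x k - Ring.inverse (V k) (f (x k))) →
        (∀ k, IsUnit (V k)) ∧ (∀ k, x k ∈ ball xs δ) ∧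
        Tendsto x atTop (𝓝 xs) ∧
        Tendsto (fun k => ‖x (k + 1) - xs‖ / ‖x k - xs‖) atTop (𝓝 0) := by
  obtain ⟨δ₁, hδ₁, C, hC, hb⟩ := nss_bound f hf xs hreg
  have step : ∀ ε > (0 : ℝ), ∃ δ > (0 : ℝ), ∀ p ∈ ball xs δ, ∀ V ∈ clarkeJacobian f p,
      IsUnit V ∧ ‖p - Ring.inverse V (f p) - xs‖ ≤ ε * ‖p - xs‖ := by
    intro ε hε
    obtain ⟨δ₂, hδ₂, h2⟩ := hss (ε / C) (by positivity)
    refine ⟨min δ₁ δ₂, lt_min hδ₁ hδ₂, fun p hp V hV => ?_⟩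
    obtain ⟨hu, hn⟩ := hb p (ball_subset_ball (min_le_left _ _) hp) V hV
    have h3 := h2 p (ball_subset_ball (min_le_right _ _) hp) V hV
    refine ⟨hu, ?_⟩
    have hinv : ∀ w, Ring.inverse V (V w) = w := fun w => by
      have := congrArg (fun A => A w) (Ring.inverse_mul_cancel V hu)
      simpa using this
    have heq : p - Ring.inverse V (f p) - xs
        = Ring.inverse V (f xs - f p - V (xs - p)) := by
      rw [map_sub, hinv, hxs, zero_sub, map_neg]; abel
    rw [heq]
    calc _ ≤ ‖Ring.inverse V‖ * ‖f xs - f p - V (xs - p)‖ := ContinuousLinearMap.le_opNorm _ _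
      _ ≤ C * (ε / C * ‖p - xs‖) := by gcongr
      _ = ε * ‖p - xs‖ := by field_simp
  obtain ⟨δ, hδ, hs⟩ := step (1 / 2) (by norm_num)
  refine ⟨δ, hδ, fun x₀ hx₀ _ x V h0 hV hx => ?_⟩
  have hball : ∀ k, x k ∈ ball xs δ := by
    intro k
    induction k with
    | zero => rw [h0]; exact hx₀
    | succ k ih =>
      have := (hs _ ih _ (hV k)).2
      rw [← hx k] at this
      rw [mem_ball_iff_norm] at ih ⊢
      linarith [norm_nonneg (x k - xs)]
  have hgeo : ∀ k, ‖x k - xs‖ ≤ (1 / 2) ^ k * ‖x 0 - xs‖ := by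
    intro k
    induction k with
    | zero => simp
    | succ k ih =>
      have := (hs _ (hball k) _ (hV k)).2
      rw [← hx k] at this
      rw [pow_succ]
      linarith
  have hlim : Tendsto x atTop (𝓝 xs) := by
    rw [tendsto_iff_norm_sub_tendsto_zero]
    refine squeeze_zero (fun _ => norm_nonneg _) hgeo ?_
    simpa using (tendsto_pow_atTop_nhds_zero_of_lt_one (r := (1 / 2 : ℝ))
      (by norm_num) (by norm_num)).mul_const ‖x 0 - xs‖
  refine ⟨fun k => (hs _ (hball k) _ (hV k)).1, hball, hlim, ?_⟩
  rw [Metric.tendsto_nhds]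
  intro ε hε
  obtain ⟨δ', hδ', hs'⟩ := step (ε / 2) (by positivity)
  filter_upwards [hlim.eventually (ball_mem_nhds xs hδ')] with k hk
  have h4 := (hs' _ hk _ (hV k)).2
  rw [← hx k] at h4
  rw [Real.dist_eq, sub_zero, abs_of_nonneg (by positivity)]
  exact (div_le_of_le_mul₀ (norm_nonneg _) (by positivity) h4).trans_lt (by linarith)
end
end

section
/- Let f : ℝⁿ → ℝⁿ be locally Lipschitz and x₀ ∈ ℝⁿ. Suppose there exist constants λ > 0, ε > 0 and radii 0 < δ̄ < δ with ελ < 1/2 and (λ/(1 − 2ελ))·‖f(x₀)‖ ≤ δ̄, such that for all p, q ∈ B_δ(x₀) and all V ∈ ∂f(p): V is invertible, ‖V⁻¹‖ ≤ λ/(1 − ελ), and ‖f(q) − f(p) − V(q − p)‖ ≤ ε‖q − p‖. Then every sequence {x_k} with x_{k+1} = x_k − V_k⁻¹ f(x_k) for some V_k ∈ ∂f(x_k) is well-defined, remains in the open ball B_δ̄(x₀), and converges to a point x* in the closed ball B̄_δ̄(x₀) with f(x*) = 0. -/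
open Metric Filter Topology

noncomputable section

/-- Kantorovich-type theorem for the Newton method (Euclidean case of Theorem 4.4, existence
and convergence): every Newton sequence starting at `x₀` is well-defined, stays in the open
ball of radius `δ̄` around `x₀`, and converges to a zero of `f` in the closed ball. -/
theorem newton_kantorovich_existence {n : ℕ}
    (f : EuclideanSpace ℝ (Fin n) → EuclideanSpace ℝ (Fin n)) (hf : LocallyLipschitz f)
    (x₀ : EuclideanSpace ℝ (Fin n)) (lam ε δbar δ : ℝ)
    (hlam : 0 < lam) (hε : 0 < ε) (hδbar : 0 < δbar) (hδ : δbar < δ)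
    (hεlam : ε * lam < 1 / 2)
    (hinit : lam / (1 - 2 * ε * lam) * ‖f x₀‖ ≤ δbar)
    (hyp : ∀ p ∈ ball x₀ δ, ∀ V ∈ clarkeJacobian f p,
      IsUnit V ∧ ‖Ring.inverse V‖ ≤ lam / (1 - ε * lam) ∧
      ∀ q ∈ ball x₀ δ, ‖f q - f p - V (q - p)‖ ≤ ε * ‖q - p‖) :
    ∀ (x : ℕ → EuclideanSpace ℝ (Fin n))
      (V : ℕ → (EuclideanSpace ℝ (Fin n) →L[ℝ] EuclideanSpace ℝ (Fin n))),
      x 0 = x₀ → (∀ k, V k ∈ clarkeJacobian f (x k)) →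
      (∀ k, x (k + 1) = x k - Ring.inverse (V k) (f (x k))) →
      (∀ k, IsUnit (V k)) ∧ (∀ k, x k ∈ ball x₀ δbar) ∧
      ∃ xs ∈ closedBall x₀ δbar, f xs = 0 ∧ Tendsto x atTop (𝓝 xs) := by
  intro x V h0 hV hx
  have h1 : 0 < 1 - 2 * ε * lam := by linarith
  have h2 : 0 < 1 - ε * lam := by linarith
  obtain ⟨M, hM⟩ : ∃ M, M = lam / (1 - ε * lam) := ⟨_, rfl⟩
  have hMpos : 0 < M := by rw [hM]; positivity
  obtain ⟨r, hr⟩ : ∃ r, r = ε * M := ⟨_, rfl⟩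
  have hr0 : 0 < r := by rw [hr]; positivity
  have hr1 : r < 1 := by
    rw [hr, hM, ← mul_div_assoc, div_lt_one h2]; linarith
  have hM2 : M = (1 - r) * (lam / (1 - 2 * ε * lam)) := by
    have h3 : M * (1 - ε * lam) = lam := by rw [hM]; exact div_mul_cancel₀ _ h2.ne'
    rw [← mul_div_assoc, eq_div_iff h1.ne', hr]
    linarith
  have hrk : ∀ k : ℕ, 0 < r ^ k := fun k => pow_pos hr0 k
  have hball : ∀ k, ‖x k - x₀‖ ≤ δbar * (1 - r ^ k) → x k ∈ ball x₀ δbar := by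
    intro k hk
    rw [mem_ball, dist_eq_norm]
    nlinarith [hrk k]
  rw [← hM] at hyp
  have step : ∀ k, x k ∈ ball x₀ δ → ‖x (k + 1) - x k‖ ≤ M * ‖f (x k)‖ := by
    intro k hk
    obtain ⟨_, hb, _⟩ := hyp _ hk _ (hV k)
    rw [hx k, sub_sub_cancel_left, norm_neg]
    exact (ContinuousLinearMap.le_opNorm _ _).trans
      (mul_le_mul_of_nonneg_right hb (norm_nonneg _))
  have main : ∀ k, ‖x k - x₀‖ ≤ δbar * (1 - r ^ k) ∧
      M * ‖f (x k)‖ ≤ δbar * (1 - r) * r ^ k := by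
    intro k
    induction k with
    | zero =>
      refine ⟨by simp [h0], ?_⟩
      rw [h0, hM2]
      have := mul_le_mul_of_nonneg_left hinit (sub_nonneg.2 hr1.le)
      simp only [pow_zero]
      linarith
    | succ k ih =>
      obtain ⟨i1, i2⟩ := ih
      have hk : x k ∈ ball x₀ δ := ball_subset_ball hδ.le (hball k i1)
      have hs := step k hk
      have a1 : ‖x (k + 1) - x₀‖ ≤ δbar * (1 - r ^ (k + 1)) := by
        have := norm_sub_le_norm_sub_add_norm_sub (x (k + 1)) (x k) x₀
        rw [pow_succ]
        linarith
      refine ⟨a1, ?_⟩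
      have hk1 : x (k + 1) ∈ ball x₀ δ := ball_subset_ball hδ.le (hball (k + 1) a1)
      obtain ⟨hu, _, hl⟩ := hyp _ hk _ (hV k)
      have hl := hl _ hk1
      have e : V k (x (k + 1) - x k) = - f (x k) := by
        have hinv : V k (Ring.inverse (V k) (f (x k))) = f (x k) := by
          have := Ring.mul_inverse_cancel (V k) hu
          simpa using congrArg (fun T => T (f (x k))) this
        rw [hx k, sub_sub_cancel_left, map_neg, hinv]
      rw [e, sub_neg_eq_add, sub_add_cancel] at hl
      calc M * ‖f (x (k + 1))‖ ≤ M * (ε * (M * ‖f (x k)‖)) := by gcongr; exact hl.trans (by gcongr)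
        _ = r * (M * ‖f (x k)‖) := by rw [hr]; ring
        _ ≤ r * (δbar * (1 - r) * r ^ k) := by gcongr
        _ = _ := by ring
  have hb : ∀ k, x k ∈ ball x₀ δbar := fun k => hball k (main k).1
  have hb' : ∀ k, x k ∈ ball x₀ δ := fun k => ball_subset_ball hδ.le (hb k)
  refine ⟨fun k => (hyp _ (hb' k) _ (hV k)).1, hb, ?_⟩
  have hc : CauchySeq x := by
    refine cauchySeq_of_le_geometric r (δbar * (1 - r)) hr1 fun k => ?_
    rw [dist_comm, dist_eq_norm]
    exact (step k (hb' k)).trans (main k).2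
  obtain ⟨xs, hxs⟩ := cauchySeq_tendsto_of_complete hc
  refine ⟨xs, isClosed_closedBall.mem_of_tendsto hxs
    (Eventually.of_forall fun k => ball_subset_closedBall (hb k)), ?_, hxs⟩
  have t1 : Tendsto (fun k => M * ‖f (x k)‖) atTop (𝓝 (M * ‖f xs‖)) :=
    (((hf.continuous.tendsto xs).comp hxs).norm).const_mul M
  have t2 : Tendsto (fun k : ℕ => δbar * (1 - r) * r ^ k) atTop (𝓝 (δbar * (1 - r) * 0)) :=
    (tendsto_pow_atTop_nhds_zero_of_lt_one hr0.le hr1).const_mul _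
  have := le_of_tendsto_of_tendsto' t1 t2 fun k => (main k).2
  rw [mul_zero] at this
  have h3 : ‖f xs‖ ≤ 0 := by
    by_contra hcon
    have := mul_pos hMpos (not_le.1 hcon)
    linarith
  exact norm_le_zero_iff.1 h3
end
end

section
/- Under the hypotheses of the Kantorovich-type theorem (f : ℝⁿ → ℝⁿ locally Lipschitz, x₀ ∈ ℝⁿ, constants λ > 0, ε > 0, 0 < δ̄ < δ with ελ < 1/2, (λ/(1 − 2ελ))·‖f(x₀)‖ ≤ δ̄, and for all p, q ∈ B_δ(x₀), V ∈ ∂f(p): V invertible, ‖V⁻¹‖ ≤ λ/(1 − ελ), ‖f(q) − f(p) − V(q − p)‖ ≤ ε‖q − p‖), the zero of f in the closed ball B̄_δ̄(x₀) is unique: if x*, q ∈ B̄_δ̄(x₀) satisfy f(x*) = 0 and f(q) = 0, then q = x*. -/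
open Metric Filter Topology

noncomputable section

theorem clarkeJacobian_nonempty_aux {n : ℕ}
    (f : EuclideanSpace ℝ (Fin n) → EuclideanSpace ℝ (Fin n)) (hf : LocallyLipschitz f)
    (p : EuclideanSpace ℝ (Fin n)) : (clarkeJacobian f p).Nonempty := by
  obtain ⟨K, t, ht, hL⟩ := hf p
  obtain ⟨r, hr, hrt⟩ := Metric.mem_nhds_iff.1 ht
  have hLb : LipschitzOnWith K f (ball p r) := hL.mono hrt
  have hae := hLb.ae_differentiableWithinAt_of_mem (μ := MeasureTheory.volume)
  have hcl : p ∈ closure {x | DifferentiableAt ℝ f x ∧ ‖fderiv ℝ f x‖ ≤ K} := by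
    rw [Metric.mem_closure_iff]
    intro e he
    have hpos : 0 < MeasureTheory.volume (ball p (min e r)) :=
      Metric.measure_ball_pos _ _ (lt_min he hr)
    obtain ⟨x, hx, hd⟩ : ∃ x ∈ ball p (min e r),
        (x ∈ ball p r → DifferentiableWithinAt ℝ f (ball p r) x) := by
      by_contra hcon
      push Not at hcon
      refine hpos.ne' (MeasureTheory.measure_mono_null ?_ (MeasureTheory.ae_iff.1 hae))
      intro x hx hc
      exact (hcon x hx).2 (hc (hcon x hx).1)
    have hxr : x ∈ ball p r := ball_subset_ball (min_le_right _ _) hx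
    have hxe : x ∈ ball p e := ball_subset_ball (min_le_left _ _) hx
    have hn : ball p r ∈ 𝓝 x := isOpen_ball.mem_nhds hxr
    exact ⟨x, ⟨(hd hxr).differentiableAt hn, norm_fderiv_le_of_lipschitzOn ℝ hn hLb⟩,
      by rw [dist_comm]; exact hxe⟩
  obtain ⟨u, hu, hup⟩ := mem_closure_iff_seq_limit.1 hcl
  obtain ⟨H, _, φ, hφ, hH⟩ := (isCompact_closedBall
    (0 : EuclideanSpace ℝ (Fin n) →L[ℝ] EuclideanSpace ℝ (Fin n)) (K : ℝ)).tendsto_subseq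
    (x := fun k => fderiv ℝ f (u k)) (fun k => by simpa using (hu k).2)
  exact ⟨H, subset_convexHull ℝ _ ⟨u ∘ φ, fun k => (hu _).1,
    hup.comp hφ.tendsto_atTop, hH⟩⟩

/-- Uniqueness assertion of the Kantorovich-type theorem (Euclidean case of Theorem 4.4):
the zero of `f` in the closed ball of radius `δ̄` around `x₀` is unique. -/
theorem newton_kantorovich_uniqueness {n : ℕ}
    (f : EuclideanSpace ℝ (Fin n) → EuclideanSpace ℝ (Fin n)) (hf : LocallyLipschitz f)
    (x₀ : EuclideanSpace ℝ (Fin n)) (lam ε δbar δ : ℝ)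
    (hlam : 0 < lam) (hε : 0 < ε) (hδbar : 0 < δbar) (hδ : δbar < δ)
    (hεlam : ε * lam < 1 / 2)
    (hinit : lam / (1 - 2 * ε * lam) * ‖f x₀‖ ≤ δbar)
    (hyp : ∀ p ∈ ball x₀ δ, ∀ V ∈ clarkeJacobian f p,
      IsUnit V ∧ ‖Ring.inverse V‖ ≤ lam / (1 - ε * lam) ∧
      ∀ q ∈ ball x₀ δ, ‖f q - f p - V (q - p)‖ ≤ ε * ‖q - p‖) :
    ∀ xs ∈ closedBall x₀ δbar, ∀ q ∈ closedBall x₀ δbar,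
      f xs = 0 → f q = 0 → q = xs := by
  intro xs hxs q hq hfx hfq
  obtain ⟨V, hV⟩ := clarkeJacobian_nonempty_aux f hf xs
  obtain ⟨hu, hinv, hb⟩ := hyp xs (closedBall_subset_ball hδ hxs) V hV
  have h1 := hb q (closedBall_subset_ball hδ hq)
  rw [hfx, hfq, sub_zero, zero_sub, norm_neg] at h1
  have h2 : Ring.inverse V (V (q - xs)) = q - xs := by
    have := Ring.inverse_mul_cancel V hu
    simpa using congrArg (fun T => T (q - xs)) this
  have h3 : ‖q - xs‖ ≤ lam / (1 - ε * lam) * (ε * ‖q - xs‖) := by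
    calc ‖q - xs‖ = ‖Ring.inverse V (V (q - xs))‖ := by rw [h2]
      _ ≤ ‖Ring.inverse V‖ * ‖V (q - xs)‖ := ContinuousLinearMap.le_opNorm _ _
      _ ≤ _ := mul_le_mul hinv h1 (norm_nonneg _) ((norm_nonneg _).trans hinv)
  have hpos : 0 < 1 - ε * lam := by linarith
  rw [div_mul_eq_mul_div, le_div_iff₀ hpos] at h3
  have h4 : ‖q - xs‖ = 0 := by
    by_contra hne
    have : 0 < ‖q - xs‖ := lt_of_le_of_ne (norm_nonneg _) (Ne.symm hne)
    nlinarith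
  exact sub_eq_zero.1 (norm_eq_zero.1 h4)
end
end

section
/- Under the hypotheses of the Kantorovich-type theorem (f : ℝⁿ → ℝⁿ locally Lipschitz, x₀ ∈ ℝⁿ, constants λ > 0, ε > 0, 0 < δ̄ < δ with ελ < 1/2, (λ/(1 − 2ελ))·‖f(x₀)‖ ≤ δ̄, and for all p, q ∈ B_δ(x₀), V ∈ ∂f(p): V invertible, ‖V⁻¹‖ ≤ λ/(1 − ελ), ‖f(q) − f(p) − V(q − p)‖ ≤ ε‖q − p‖), the Newton sequence x_{k+1} = x_k − V_k⁻¹ f(x_k), V_k ∈ ∂f(x_k), converges to the zero x* of f in B̄_δ̄(x₀) with the error estimate ‖x_k − x*‖ ≤ (ελ/(1 − 2ελ))·‖x_k − x_{k−1}‖ for all k ≥ 1. -/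
open Metric Filter Topology

noncomputable section

/-- Error estimate of the Kantorovich-type theorem (Euclidean case of Theorem 4.4): the
Newton sequence converges to the zero `x*` of `f` in the closed ball with
`‖x_k - x*‖ ≤ (ελ/(1-2ελ))·‖x_k - x_{k-1}‖` for every `k ≥ 1`. -/
theorem newton_kantorovich_error_estimate {n : ℕ}
    (f : EuclideanSpace ℝ (Fin n) → EuclideanSpace ℝ (Fin n)) (hf : LocallyLipschitz f)
    (x₀ : EuclideanSpace ℝ (Fin n)) (lam ε δbar δ : ℝ)
    (hlam : 0 < lam) (hε : 0 < ε) (hδbar : 0 < δbar) (hδ : δbar < δ)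
    (hεlam : ε * lam < 1 / 2)
    (hinit : lam / (1 - 2 * ε * lam) * ‖f x₀‖ ≤ δbar)
    (hyp : ∀ p ∈ ball x₀ δ, ∀ V ∈ clarkeJacobian f p,
      IsUnit V ∧ ‖Ring.inverse V‖ ≤ lam / (1 - ε * lam) ∧
      ∀ q ∈ ball x₀ δ, ‖f q - f p - V (q - p)‖ ≤ ε * ‖q - p‖) :
    ∀ (x : ℕ → EuclideanSpace ℝ (Fin n))
      (V : ℕ → (EuclideanSpace ℝ (Fin n) →L[ℝ] EuclideanSpace ℝ (Fin n))),
      x 0 = x₀ → (∀ k, V k ∈ clarkeJacobian f (x k)) →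
      (∀ k, x (k + 1) = x k - Ring.inverse (V k) (f (x k))) →
      ∃ xs ∈ closedBall x₀ δbar, f xs = 0 ∧ Tendsto x atTop (𝓝 xs) ∧
        ∀ k, ‖x (k + 1) - xs‖ ≤ ε * lam / (1 - 2 * ε * lam) * ‖x (k + 1) - x k‖ := by
  intro x V hx0 hV hx
  have ha : 0 < ε * lam := mul_pos hε hlam
  have h1a : 0 < 1 - ε * lam := by linarith
  have h2a : 0 < 1 - 2 * ε * lam := by linarith
  obtain ⟨c, hc⟩ : ∃ c, c = ε * lam / (1 - ε * lam) := ⟨_, rfl⟩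
  have hc0 : 0 < c := by rw [hc]; positivity
  have hc1 : c < 1 := by rw [hc, div_lt_one h1a]; linarith
  have h1c : 1 - c = (1 - 2 * ε * lam) / (1 - ε * lam) := by
    rw [hc]; field_simp; ring
  have hcc : c / (1 - c) = ε * lam / (1 - 2 * ε * lam) := by
    rw [h1c, hc]; field_simp
  -- residual and step bounds
  have hstep : ∀ k, x k ∈ ball x₀ δ →
      ‖x (k + 1) - x k‖ ≤ lam / (1 - ε * lam) * ‖f (x k)‖ := by
    intro k hk
    have h := (hyp _ hk _ (hV k)).2.1
    have e : x (k + 1) - x k = - Ring.inverse (V k) (f (x k)) := by rw [hx k]; abel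
    rw [e, norm_neg]
    exact ((Ring.inverse (V k)).le_opNorm _).trans
      (mul_le_mul_of_nonneg_right h (norm_nonneg _))
  have hres : ∀ k, x k ∈ ball x₀ δ → x (k + 1) ∈ ball x₀ δ →
      ‖f (x (k + 1))‖ ≤ ε * ‖x (k + 1) - x k‖ := by
    intro k hk hk1
    obtain ⟨hu, -, h⟩ := hyp _ hk _ (hV k)
    have h := h _ hk1
    have e : x (k + 1) - x k = - Ring.inverse (V k) (f (x k)) := by rw [hx k]; abel
    have e2 : V k (x (k + 1) - x k) = - f (x k) := by
      rw [e, map_neg]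
      have := congrArg (fun T => T (f (x k))) (Ring.mul_inverse_cancel _ hu)
      simpa using this
    rw [e2] at h
    simpa using h
  have hcontr : ∀ k, x k ∈ ball x₀ δ → x (k + 1) ∈ ball x₀ δ →
      ‖x (k + 2) - x (k + 1)‖ ≤ c * ‖x (k + 1) - x k‖ := by
    intro k hk hk1
    calc _ ≤ lam / (1 - ε * lam) * ‖f (x (k + 1))‖ := hstep (k + 1) hk1
      _ ≤ lam / (1 - ε * lam) * (ε * ‖x (k + 1) - x k‖) := by
        have := hres k hk hk1
        gcongr
      _ = _ := by rw [hc]; ring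
  have hball : ∀ k y, ‖y - x₀‖ ≤ (1 - c ^ k) * δbar → y ∈ closedBall x₀ δbar := by
    intro k y hy
    rw [mem_closedBall, dist_eq_norm]
    have : 0 < c ^ k * δbar := by positivity
    linarith
  have hsub : closedBall x₀ δbar ⊆ ball x₀ δ := closedBall_subset_ball hδ
  have hind : ∀ k, ‖x k - x₀‖ ≤ (1 - c ^ k) * δbar ∧
      ‖x (k + 1) - x k‖ ≤ (1 - c) * δbar * c ^ k := by
    intro k
    induction k with
    | zero =>
      refine ⟨by simp [hx0], ?_⟩
      have h0 : x 0 ∈ ball x₀ δ := by rw [hx0]; exact mem_ball_self (hδbar.trans hδ)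
      have h := hstep 0 h0
      rw [hx0] at h
      have e : lam / (1 - ε * lam) * ‖f x₀‖
          = (1 - c) * (lam / (1 - 2 * ε * lam) * ‖f x₀‖) := by
        rw [h1c, ← mul_assoc, div_mul_div_comm, mul_comm (1 - 2 * ε * lam) lam,
          mul_div_mul_right _ _ h2a.ne']
      rw [e] at h
      rw [hx0, pow_zero, mul_one]
      exact h.trans (mul_le_mul_of_nonneg_left hinit (by linarith))
    | succ k ih =>
      obtain ⟨i1, i2⟩ := ih
      have j1 : ‖x (k + 1) - x₀‖ ≤ (1 - c ^ (k + 1)) * δbar := by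
        have := norm_sub_le_norm_sub_add_norm_sub (x (k + 1)) (x k) x₀
        rw [pow_succ]
        nlinarith
      refine ⟨j1, ?_⟩
      have := hcontr k (hsub (hball k _ i1)) (hsub (hball _ _ j1))
      have h3 := mul_le_mul_of_nonneg_left i2 hc0.le
      rw [pow_succ]
      calc _ ≤ _ := this
        _ ≤ _ := h3
        _ = _ := by ring
  have hcb : ∀ k, x k ∈ closedBall x₀ δbar := fun k => hball k _ (hind k).1
  have hb : ∀ k, x k ∈ ball x₀ δ := fun k => hsub (hcb k)
  have hcau : CauchySeq x := by
    refine cauchySeq_of_le_geometric c ((1 - c) * δbar) hc1 fun k => ?_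
    rw [dist_comm, dist_eq_norm]
    exact (hind k).2
  obtain ⟨xs, hxs⟩ := cauchySeq_tendsto_of_complete hcau
  refine ⟨xs, isClosed_closedBall.mem_of_tendsto hxs (Eventually.of_forall hcb), ?_, hxs, ?_⟩
  · have hxs1 : Tendsto (fun k => x (k + 1)) atTop (𝓝 xs) := (tendsto_add_atTop_iff_nat 1).2 hxs
    have t1 : Tendsto (fun k => f (x (k + 1))) atTop (𝓝 (f xs)) :=
      (hf.continuous.tendsto xs).comp hxs1
    have t2 : Tendsto (fun k => ε * ‖x (k + 1) - x k‖) atTop (𝓝 0) := by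
      simpa using ((hxs1.sub hxs).norm).const_mul ε
    have t3 : Tendsto (fun k => f (x (k + 1))) atTop (𝓝 0) :=
      squeeze_zero_norm (fun k => hres k (hb k) (hb (k + 1))) t2
    exact tendsto_nhds_unique t1 t3
  · intro k
    have hg : ∀ j, ‖x (k + 1 + (j + 1)) - x (k + 1 + j)‖
        ≤ c * ‖x (k + 1) - x k‖ * c ^ j := by
      intro j
      induction j with
      | zero => simpa using hcontr k (hb _) (hb _)
      | succ j ih =>
        have := hcontr (k + 1 + j) (hb _) (hb _)
        have h3 := mul_le_mul_of_nonneg_left ih hc0.le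
        rw [pow_succ]
        calc _ ≤ _ := this
          _ ≤ _ := h3
          _ = _ := by ring
    have hy : Tendsto (fun j => x (k + 1 + j)) atTop (𝓝 xs) := by
      have := (tendsto_add_atTop_iff_nat (k + 1)).2 hxs
      simpa [add_comm] using this
    have := dist_le_of_le_geometric_of_tendsto₀ c (c * ‖x (k + 1) - x k‖) hc1
      (f := fun j => x (k + 1 + j))
      (fun j => by rw [dist_comm, dist_eq_norm]; exact hg j) hy
    rw [dist_eq_norm] at this
    rw [← hcc]
    calc _ ≤ _ := this
      _ = _ := by ring
end
end

section
/- Under the hypotheses of the Kantorovich-type theorem (f : ℝⁿ → ℝⁿ locally Lipschitz, x₀ ∈ ℝⁿ, constants λ > 0, ε > 0, 0 < δ̄ < δ with ελ < 1/2, (λ/(1 − 2ελ))·‖f(x₀)‖ ≤ δ̄, and for all p, q ∈ B_δ(x₀), V ∈ ∂f(p): V invertible, ‖V⁻¹‖ ≤ λ/(1 − ελ), ‖f(q) − f(p) − V(q − p)‖ ≤ ε‖q − p‖), every Newton sequence x_{k+1} = x_k − V_k⁻¹ f(x_k), V_k ∈ ∂f(x_k), starting at x₀ satisfies the step-length bound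 ‖x_{k+1} − x_k‖ ≤ (ελ/(1 − ελ))^k · δ̄ · (1 − 2ελ)/(1 − ελ) for all k ≥ 0; in particular {x_k} is a Cauchy sequence. -/
open Metric Filter Topology

noncomputable section

/-- Step-length bound in the Kantorovich-type theorem (inequality (eq:ikt) in the proof of
Theorem 4.4, Euclidean case): every Newton sequence starting at `x₀` satisfies
`‖x_{k+1} - x_k‖ ≤ (ελ/(1-ελ))^k · δ̄ · (1-2ελ)/(1-ελ)`; in particular it is Cauchy. -/
theorem newton_kantorovich_step_bound {n : ℕ}
    (f : EuclideanSpace ℝ (Fin n) → EuclideanSpace ℝ (Fin n)) (hf : LocallyLipschitz f)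
    (x₀ : EuclideanSpace ℝ (Fin n)) (lam ε δbar δ : ℝ)
    (hlam : 0 < lam) (hε : 0 < ε) (hδbar : 0 < δbar) (hδ : δbar < δ)
    (hεlam : ε * lam < 1 / 2)
    (hinit : lam / (1 - 2 * ε * lam) * ‖f x₀‖ ≤ δbar)
    (hyp : ∀ p ∈ ball x₀ δ, ∀ V ∈ clarkeJacobian f p,
      IsUnit V ∧ ‖Ring.inverse V‖ ≤ lam / (1 - ε * lam) ∧
      ∀ q ∈ ball x₀ δ, ‖f q - f p - V (q - p)‖ ≤ ε * ‖q - p‖) :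
    ∀ (x : ℕ → EuclideanSpace ℝ (Fin n))
      (V : ℕ → (EuclideanSpace ℝ (Fin n) →L[ℝ] EuclideanSpace ℝ (Fin n))),
      x 0 = x₀ → (∀ k, V k ∈ clarkeJacobian f (x k)) →
      (∀ k, x (k + 1) = x k - Ring.inverse (V k) (f (x k))) →
      (∀ k : ℕ, ‖x (k + 1) - x k‖ ≤
        (ε * lam / (1 - ε * lam)) ^ k * δbar * ((1 - 2 * ε * lam) / (1 - ε * lam))) ∧
      CauchySeq x := by
  intro x V hx0 hV hx
  have h1 : 0 < 1 - ε * lam := by linarith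
  have h2 : 0 < 1 - 2 * ε * lam := by linarith
  have hel : 0 < ε * lam := mul_pos hε hlam
  obtain ⟨r, hr⟩ : ∃ r, r = ε * lam / (1 - ε * lam) := ⟨_, rfl⟩
  have hc : (1 - 2 * ε * lam) / (1 - ε * lam) = 1 - r := by
    rw [hr]; field_simp; ring
  have hr0 : 0 < r := by rw [hr]; positivity
  have hr1 : r < 1 := by rw [hr, div_lt_one h1]; linarith
  have hstep : ∀ k, x (k + 1) - x k = - Ring.inverse (V k) (f (x k)) := by
    intro k; rw [hx k]; abel
  have hball : ∀ k, ‖x k - x₀‖ ≤ δbar * (1 - r ^ k) → x k ∈ ball x₀ δ := by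
    intro k h
    rw [mem_ball, dist_eq_norm]
    have : 0 < δbar * r ^ k := by positivity
    linarith
  have hsn : ∀ k, x k ∈ ball x₀ δ →
      ‖x (k + 1) - x k‖ ≤ lam / (1 - ε * lam) * ‖f (x k)‖ := by
    intro k hk
    rw [hstep, norm_neg]
    exact (ContinuousLinearMap.le_opNorm _ _).trans
      (mul_le_mul_of_nonneg_right (hyp _ hk _ (hV k)).2.1 (norm_nonneg _))
  have key : ∀ k, ‖x k - x₀‖ ≤ δbar * (1 - r ^ k) ∧
      ‖x (k + 1) - x k‖ ≤ r ^ k * δbar * (1 - r) := by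
    intro k
    induction k with
    | zero =>
      have h0 : ‖x 0 - x₀‖ ≤ δbar * (1 - r ^ 0) := by simp [hx0]
      refine ⟨h0, (hsn 0 (hball 0 h0)).trans ?_⟩
      rw [hx0, ← hc]
      calc lam / (1 - ε * lam) * ‖f x₀‖
          = (lam / (1 - 2 * ε * lam) * ‖f x₀‖) * ((1 - 2 * ε * lam) / (1 - ε * lam)) := by
            clear hc hr
            generalize 1 - 2 * ε * lam = a at h2 ⊢
            generalize 1 - ε * lam = b at h1 ⊢
            field_simp
        _ ≤ δbar * ((1 - 2 * ε * lam) / (1 - ε * lam)) :=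
            mul_le_mul_of_nonneg_right hinit (by positivity)
        _ = _ := by simp
    | succ k ih =>
      obtain ⟨ha, hb⟩ := ih
      have ha' : ‖x (k + 1) - x₀‖ ≤ δbar * (1 - r ^ (k + 1)) := by
        calc ‖x (k + 1) - x₀‖ ≤ ‖x (k + 1) - x k‖ + ‖x k - x₀‖ :=
              norm_sub_le_norm_sub_add_norm_sub _ _ _
          _ ≤ r ^ k * δbar * (1 - r) + δbar * (1 - r ^ k) := add_le_add hb ha
          _ = _ := by ring
      have hk := hball k ha
      have hk' := hball (k + 1) ha'
      refine ⟨ha', (hsn _ hk').trans ?_⟩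
      obtain ⟨hu, -, hq⟩ := hyp _ hk _ (hV k)
      have hq := hq _ hk'
      have hVf : V k (x (k + 1) - x k) = - f (x k) := by
        rw [hstep, map_neg]
        have := congrArg (fun L => L (f (x k))) (Ring.mul_inverse_cancel _ hu)
        simpa using this
      have hfe : f (x (k + 1)) - f (x k) - V k (x (k + 1) - x k) = f (x (k + 1)) := by
        rw [hVf]; abel
      rw [hfe] at hq
      calc lam / (1 - ε * lam) * ‖f (x (k + 1))‖
          ≤ lam / (1 - ε * lam) * (ε * (r ^ k * δbar * (1 - r))) := by gcongr; exact hq.trans (by gcongr)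
        _ = (ε * lam / (1 - ε * lam)) * (r ^ k * δbar * (1 - r)) := by ring
        _ = r ^ (k + 1) * δbar * (1 - r) := by rw [← hr]; ring
  refine ⟨fun k => ?_, ?_⟩
  · rw [hc, ← hr]; exact (key k).2
  · refine cauchySeq_of_le_geometric r (δbar * (1 - r)) hr1 fun k => ?_
    rw [dist_comm, dist_eq_norm]
    exact (key k).2.trans (le_of_eq (by ring))
end
end
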